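/- For all real numbers $A$, $B$, $C$, setting $\eta = \sqrt{A^2 + B^2 + C^2}$, one has $\frac{1}{2\pi^2} \int_0^{\pi} \int_0^{2\pi} \cos\big(A \sin\theta \cos\phi + B \sin\theta \sin\phi + C \cos\theta\big)\, d\phi\, d\theta = J_0\!\Big(\frac{\eta + C}{2}\Big) J_0\!\Big(\frac{\eta - C}{2}\Big)$. -/

import Mathlib

/-- The Bessel function of the first kind of order zero, defined by its
integral representation `J₀(x) = (1/2π) ∫₀^{2π} cos(x sin t) dt`. -/
noncomputable def besselJ0 (x : ℝ) : ℝ :=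
  (1 / (2 * Real.pi)) * ∫ t in (0 : ℝ)..(2 * Real.pi), Real.cos (x * Real.sin t)

/-!
Both sides are reduced to the same single integral of `besselJ0`. On the left, rotating the azimuth
turns the phase into `r sin θ sin φ + C cos θ` with `r ^ 2 = A ^ 2 + B ^ 2`; integrating over `θ`
first, this is a sinusoid in `θ` of amplitude `√(r ^ 2 * sin φ ^ 2 + C ^ 2)`, which leaves the
average of `J₀` of that amplitude. On the right, Neumann's product formula writes `J₀ a * J₀ b` as
the average over `s` of `J₀ (√(a ^ 2 + b ^ 2 - 2 * a * b * cos s))`. For `a = (η + C) / 2` and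
`b = (η - C) / 2` the two amplitudes agree under `s = 2 * φ`.
-/

open Real MeasureTheory

section IntervalIntegral

variable {E : Type*} [NormedAddCommGroup E] [NormedSpace ℝ E]

lemma intervalIntegral_swap_of_continuous {f : ℝ → ℝ → E} (hf : Continuous (Function.uncurry f))
    (a b c d : ℝ) : ∫ x in a..b, ∫ y in c..d, f x y = ∫ y in c..d, ∫ x in a..b, f x y := by
  refine intervalIntegral_intervalIntegral_swap ?_
  have h_compact : IsCompact (Set.uIcc a b ×ˢ Set.uIcc c d) := isCompact_uIcc.prod isCompact_uIcc
  exact (hf.continuousOn.integrableOn_compact h_compact).mono_set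
    (Set.prod_mono Set.uIoc_subset_uIcc Set.uIoc_subset_uIcc)

lemma integral_comp_add_right_of_periodic {f : ℝ → E} {T : ℝ} (hf : Function.Periodic f T)
    (c : ℝ) : ∫ t in (0 : ℝ)..T, f (t + c) = ∫ t in (0 : ℝ)..T, f t := by
  simpa [add_comm T] using hf.intervalIntegral_add_eq c 0

lemma integral_zero_natCast_mul_of_periodic {f : ℝ → E} {T : ℝ} (hf : Function.Periodic f T)
    (h_int : ∀ t₁ t₂, IntervalIntegrable f volume t₁ t₂) (n : ℕ) :
    ∫ t in (0 : ℝ)..n * T, f t = (n : ℝ) • ∫ t in (0 : ℝ)..T, f t := by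
  simpa [← Nat.cast_smul_eq_nsmul ℝ] using hf.intervalIntegral_add_zsmul_eq n 0 h_int

lemma integral_comp_natCast_mul_of_periodic {f : ℝ → E} {T : ℝ} (hf : Function.Periodic f T)
    (h_int : ∀ t₁ t₂, IntervalIntegrable f volume t₁ t₂) {n : ℕ} (hn : n ≠ 0) :
    ∫ t in (0 : ℝ)..T, f (n * t) = ∫ t in (0 : ℝ)..T, f t := by
  have hn' : (n : ℝ) ≠ 0 := Nat.cast_ne_zero.mpr hn
  rw [intervalIntegral.integral_comp_mul_left f hn', mul_zero,
    integral_zero_natCast_mul_of_periodic hf h_int, inv_smul_smul₀ hn']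

lemma integral_comp_sin_eq_zero_of_odd {f : ℝ → E} (hf : Function.Odd f) :
    ∫ t in (0 : ℝ)..2 * π, f (sin t) = 0 := by
  have h_shift := integral_comp_add_right_of_periodic (sin_periodic.comp f) π
  simp only [Function.comp_apply, sin_add_pi, hf (sin _), intervalIntegral.integral_neg] at h_shift
  have h_two : (2 : ℝ) • ∫ t in (0 : ℝ)..2 * π, f (sin t) = 0 := by
    rw [two_smul, neg_eq_iff_add_eq_zero.mp h_shift]
  exact (smul_eq_zero_iff_right two_ne_zero).mp h_two

lemma exists_forall_mul_sin_add_mul_cos_eq (p q : ℝ) :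
    ∃ α, ∀ t, p * sin t + q * cos t = √(p ^ 2 + q ^ 2) * sin (t + α) := by
  have h_norm : ‖(⟨p, q⟩ : ℂ)‖ = √(p ^ 2 + q ^ 2) := Complex.norm_eq_sqrt_sq_add_sq _
  have h_cos : √(p ^ 2 + q ^ 2) * cos (Complex.arg ⟨p, q⟩) = p :=
    h_norm ▸ Complex.norm_mul_cos_arg ⟨p, q⟩
  have h_sin : √(p ^ 2 + q ^ 2) * sin (Complex.arg ⟨p, q⟩) = q :=
    h_norm ▸ Complex.norm_mul_sin_arg ⟨p, q⟩
  refine ⟨Complex.arg ⟨p, q⟩, fun t ↦ ?_⟩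
  rw [sin_add]
  linear_combination (-sin t) * h_cos - cos t * h_sin

lemma integral_comp_mul_sin_add_mul_cos (f : ℝ → E) (p q : ℝ) :
    ∫ t in (0 : ℝ)..2 * π, f (p * sin t + q * cos t) =
      ∫ t in (0 : ℝ)..2 * π, f (√(p ^ 2 + q ^ 2) * sin t) := by
  obtain ⟨α, hα⟩ := exists_forall_mul_sin_add_mul_cos_eq p q
  simp only [hα]
  exact integral_comp_add_right_of_periodic
    (sin_periodic.comp fun y ↦ f (√(p ^ 2 + q ^ 2) * y)) α

end IntervalIntegral

lemma continuous_besselJ0 : Continuous besselJ0 :=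
  continuous_const.mul <|
    intervalIntegral.continuous_parametric_intervalIntegral_of_continuous' (by fun_prop) _ _

lemma integral_cos_mul_sin (x : ℝ) :
    ∫ t in (0 : ℝ)..2 * π, cos (x * sin t) = 2 * π * besselJ0 x := by
  rw [besselJ0]
  field_simp

lemma integral_cos_mul_sin_add (x c : ℝ) :
    ∫ t in (0 : ℝ)..2 * π, cos (x * sin t + c) = 2 * π * besselJ0 x * cos c := by
  have h_odd : ∫ t in (0 : ℝ)..2 * π, sin (x * sin t) = 0 :=
    integral_comp_sin_eq_zero_of_odd (f := fun y ↦ sin (x * y)) fun y ↦ by simp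
  simp only [cos_add]
  rw [intervalIntegral.integral_sub (Continuous.intervalIntegrable (by fun_prop) _ _)
      (Continuous.intervalIntegrable (by fun_prop) _ _),
    intervalIntegral.integral_mul_const, intervalIntegral.integral_mul_const,
    integral_cos_mul_sin, h_odd, zero_mul, sub_zero]

lemma integral_cos_mul_sin_add_mul_cos (p q : ℝ) :
    ∫ t in (0 : ℝ)..2 * π, cos (p * sin t + q * cos t) = 2 * π * besselJ0 √(p ^ 2 + q ^ 2) := by
  rw [integral_comp_mul_sin_add_mul_cos, integral_cos_mul_sin]

lemma integral_zero_pi_cos_mul_sin_add_mul_cos (p q : ℝ) :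
    ∫ t in (0 : ℝ)..π, cos (p * sin t + q * cos t) = π * besselJ0 √(p ^ 2 + q ^ 2) := by
  have h_periodic : Function.Periodic (fun t ↦ cos (p * sin t + q * cos t)) π := fun t ↦ by
    simp only [sin_add_pi, cos_add_pi, mul_neg, ← neg_add, cos_neg]
  have h_double := integral_zero_natCast_mul_of_periodic h_periodic
    (Continuous.intervalIntegrable (by fun_prop)) 2
  rw [Nat.cast_two, integral_cos_mul_sin_add_mul_cos, smul_eq_mul] at h_double
  linarith

/-- Neumann's product formula: shifting one variable of the double integral by the other turns the
phase into a sinusoid in the unshifted variable. -/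
theorem besselJ0_mul_besselJ0 (a b : ℝ) :
    besselJ0 a * besselJ0 b =
      1 / (2 * π) * ∫ s in (0 : ℝ)..2 * π, besselJ0 √(a ^ 2 + b ^ 2 - 2 * a * b * cos s) := by
  have h_inner_left (t : ℝ) : ∫ s in (0 : ℝ)..2 * π, cos (a * sin (s + t) + -b * sin t) =
      2 * π * besselJ0 a * cos (b * sin t) := by
    rw [integral_comp_add_right_of_periodic (f := fun s ↦ cos (a * sin s + -b * sin t))
      (fun s ↦ by simp), integral_cos_mul_sin_add, neg_mul, cos_neg]
  have h_inner_right (s : ℝ) : ∫ t in (0 : ℝ)..2 * π, cos (a * sin (s + t) + -b * sin t) =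
      2 * π * besselJ0 √(a ^ 2 + b ^ 2 - 2 * a * b * cos s) := by
    have h_phase (t : ℝ) : a * sin (s + t) + -b * sin t =
        (a * cos s - b) * sin t + a * sin s * cos t := by
      rw [sin_add]
      ring
    have h_amplitude : (a * cos s - b) ^ 2 + (a * sin s) ^ 2 =
        a ^ 2 + b ^ 2 - 2 * a * b * cos s := by
      linear_combination a ^ 2 * sin_sq_add_cos_sq s
    simp only [h_phase]
    rw [integral_cos_mul_sin_add_mul_cos, h_amplitude]
  have h_swap := intervalIntegral_swap_of_continuous
    (f := fun t s ↦ cos (a * sin (s + t) + -b * sin t)) (by fun_prop) 0 (2 * π) 0 (2 * π)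
  simp only [h_inner_left, h_inner_right, intervalIntegral.integral_const_mul,
    integral_cos_mul_sin] at h_swap
  field_simp at h_swap ⊢
  linarith

lemma integral_cos_phase_azimuth (A B C θ : ℝ) :
    ∫ φ in (0 : ℝ)..2 * π, cos (A * sin θ * cos φ + B * sin θ * sin φ + C * cos θ) =
      ∫ φ in (0 : ℝ)..2 * π, cos (√(A ^ 2 + B ^ 2) * sin φ * sin θ + C * cos θ) := by
  have h_rotate := integral_comp_mul_sin_add_mul_cos (fun y ↦ cos (y * sin θ + C * cos θ)) B A
  rw [add_comm (B ^ 2)] at h_rotate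
  rw [← h_rotate]
  congr with φ
  ring_nf

theorem integral_integral_cos_phase (A B C : ℝ) :
    ∫ θ in (0 : ℝ)..π, ∫ φ in (0 : ℝ)..2 * π,
        cos (A * sin θ * cos φ + B * sin θ * sin φ + C * cos θ) =
      π * ∫ φ in (0 : ℝ)..2 * π, besselJ0 √((A ^ 2 + B ^ 2) * sin φ ^ 2 + C ^ 2) := by
  simp only [integral_cos_phase_azimuth]
  rw [intervalIntegral_swap_of_continuous (by fun_prop)]
  simp only [integral_zero_pi_cos_mul_sin_add_mul_cos, intervalIntegral.integral_const_mul,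
    mul_pow, sq_sqrt (add_nonneg (sq_nonneg A) (sq_nonneg B))]

/-- Master closed-form expectation (Lemmas 2–4 of the paper): the average of
the cosine of a linear phase in a random direction, with elevation uniform on
`[0, π]` and azimuth uniform on `[0, 2π]`, independently. -/
theorem expectation_cos_random_direction (A B C : ℝ) :
    (1 / (2 * Real.pi ^ 2)) *
        ∫ θ in (0 : ℝ)..Real.pi, ∫ φ in (0 : ℝ)..(2 * Real.pi),
          Real.cos (A * Real.sin θ * Real.cos φ + B * Real.sin θ * Real.sin φ +
            C * Real.cos θ) =
      besselJ0 ((Real.sqrt (A ^ 2 + B ^ 2 + C ^ 2) + C) / 2) *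
        besselJ0 ((Real.sqrt (A ^ 2 + B ^ 2 + C ^ 2) - C) / 2) := by
  set η := √(A ^ 2 + B ^ 2 + C ^ 2)
  have hη : η ^ 2 = A ^ 2 + B ^ 2 + C ^ 2 := sq_sqrt (by positivity)
  let g (s : ℝ) : ℝ := besselJ0 √(((η + C) / 2) ^ 2 + ((η - C) / 2) ^ 2 -
    2 * ((η + C) / 2) * ((η - C) / 2) * cos s)
  have hg_periodic : Function.Periodic g (2 * π) := fun s ↦ by simp only [g, cos_add_two_pi]
  have hg_cont : Continuous g := continuous_besselJ0.comp (by fun_prop)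
  have hg_double (φ : ℝ) : besselJ0 √((A ^ 2 + B ^ 2) * sin φ ^ 2 + C ^ 2) = g ((2 : ℕ) * φ) := by
    simp only [g, Nat.cast_ofNat, cos_two_mul, cos_sq']
    congr 2
    linear_combination (-sin φ ^ 2) * hη
  calc
    _ = 1 / (2 * π ^ 2) * (π * ∫ φ in (0 : ℝ)..2 * π, g ((2 : ℕ) * φ)) := by
      simp only [integral_integral_cos_phase, hg_double]
    _ = 1 / (2 * π) * ∫ s in (0 : ℝ)..2 * π, g s := by
      rw [integral_comp_natCast_mul_of_periodic hg_periodic hg_cont.intervalIntegrable two_ne_zero]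
      field_simp
    _ = _ := (besselJ0_mul_besselJ0 _ _).symm
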